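/- For any autoregressive (tree-structured, deterministic-transition) MDP with horizon H and policy π, the sum over steps h of the expected (over states s_h from the state distribution of π at step h) variance over actions a ∼ π(·|s_h) of the action-value function Q_π(s_h, a) equals the expected (over initial prompts x ∼ ρ) variance of the total cumulative reward of a trajectory sampled from π conditioned on x. That is, Σ_{h=1}^H E_{s_h ∼ d_h^π}[Var_{a∼π(·|s_h)}[Q_π(s_h,a)]] = E_{x∼ρ}[Var_{τ∼π(·|x)}[r(τ)]]. -/

import Mathlib

open Finset

/-- Probability, under policy `π` and prompt `x`, of observing the token prefix `p`
in an autoregressive MDP (states are prompt-plus-token-prefixes, transitions are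
deterministic concatenations). -/
noncomputable def prefProb {X A : Type*} [Inhabited A]
    (π : X → List A → A → ℝ) (x : X) (p : List A) : ℝ :=
  ∏ i ∈ Finset.range p.length, π x (p.take i) (p.getD i default)

/-- Action-value function `Q_π` of policy `π` with per-step reward `r`, at prompt `x`,
prefix `p` and action `a`, when `n` further steps remain after the current one:
the expected cumulative reward-to-go. -/
noncomputable def Qfun {X A : Type*} [Fintype A]
    (π : X → List A → A → ℝ) (r : X → List A → A → ℝ) (x : X) :
    ℕ → List A → A → ℝ
  | 0, p, a => r x p a
  | n + 1, p, a =>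
      r x p a + ∑ a' : A, π x (p ++ [a]) a' * Qfun π r x n (p ++ [a]) a'

/-!
Given a prefix `p` of the trajectory, the expected total return is a martingale `M` along the prefix
process, and from `p` it moves to `cumReward p + Q_π(p, a)` when the action `a` is drawn. For any
constant `c`, the bias-variance identity therefore says that each step increases `E[(M - c) ^ 2]` by
exactly the expected action variance of `Q_π`. Summing over the steps telescopes; the martingale
ends at the return itself, and starts at the mean return, which is the value to take for `c`.
-/

section WeightedVariance

variable {ι R : Type*} [Fintype ι] [CommRing R]

/-- Variance of `f` under the finite distribution with weights `w`. The weights are meant to sum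
to `1`; this is a hypothesis of the lemmas that need it. -/
def weightedVar (w f : ι → R) : R :=
  ∑ i, w i * (f i - ∑ j, w j * f j) ^ 2

theorem sum_mul_const_add {w : ι → R} (hw : ∑ i, w i = 1) (b : R) (f : ι → R) :
    ∑ i, w i * (b + f i) = b + ∑ i, w i * f i := by
  simp only [mul_add, sum_add_distrib, ← sum_mul, hw, one_mul]

theorem weightedVar_const_add {w : ι → R} (hw : ∑ i, w i = 1) (b : R) (f : ι → R) :
    weightedVar w (fun i => b + f i) = weightedVar w f := by
  simp only [weightedVar, sum_mul_const_add hw, add_sub_add_left_eq_sub]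

theorem sum_mul_sub_sq {w : ι → R} (hw : ∑ i, w i = 1) (f : ι → R) (c : R) :
    ∑ i, w i * (f i - c) ^ 2 = (∑ i, w i * f i - c) ^ 2 + weightedVar w f := by
  rw [weightedVar]
  set m := ∑ i, w i * f i with hm
  have expand (i : ι) : w i * (f i - c) ^ 2 =
      w i * (f i - m) ^ 2 + 2 * (m - c) * (w i * f i) + w i * ((m - c) ^ 2 - 2 * (m - c) * m) := by
    ring
  simp only [expand, sum_add_distrib, ← mul_sum, ← sum_mul, hw, ← hm]
  ring

end WeightedVariance

section Prefix

variable {X A : Type*} [Inhabited A]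

@[to_additive]
theorem prod_range_take_getD_append_singleton {M : Type*} [CommMonoid M]
    (g : List A → A → M) (p : List A) (a : A) :
    ∏ i ∈ range (p ++ [a]).length, g ((p ++ [a]).take i) ((p ++ [a]).getD i default) =
      (∏ i ∈ range p.length, g (p.take i) (p.getD i default)) * g p a := by
  rw [List.length_append, List.length_singleton, prod_range_succ]
  congr 1
  · refine prod_congr rfl fun i hi => ?_
    have hi : i < p.length := mem_range.1 hi
    rw [List.take_append_of_le_length hi.le, List.getD_append _ _ _ _ hi]
  · simp

/-- Reward collected along the prefix `p`, in the indexing of `prefProb`. -/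
def cumReward (r : X → List A → A → ℝ) (x : X) (p : List A) : ℝ :=
  ∑ i ∈ range p.length, r x (p.take i) (p.getD i default)

theorem cumReward_nil (r : X → List A → A → ℝ) (x : X) : cumReward r x [] = 0 :=
  sum_range_zero _

theorem cumReward_append_singleton (r : X → List A → A → ℝ) (x : X) (p : List A) (a : A) :
    cumReward r x (p ++ [a]) = cumReward r x p + r x p a :=
  sum_range_take_getD_append_singleton (r x) p a

theorem cumReward_ofFn (r : X → List A → A → ℝ) (x : X) {n : ℕ} (τ : Fin n → A) :
    cumReward r x (List.ofFn τ) = ∑ i : Fin n, r x ((List.ofFn τ).take i) (τ i) := by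
  rw [cumReward, List.length_ofFn, sum_range]
  simp

theorem prefProb_append_singleton (π : X → List A → A → ℝ) (x : X) (p : List A) (a : A) :
    prefProb π x (p ++ [a]) = prefProb π x p * π x p a :=
  prod_range_take_getD_append_singleton (π x) p a

variable [Fintype A]

/-- Expectation of `f` over the length-`h` prefixes sampled from `π` at prompt `x`, that is, over
the state distribution of `π` at step `h`. -/
noncomputable def prefExp (π : X → List A → A → ℝ) (x : X) (h : ℕ) (f : List A → ℝ) : ℝ :=
  ∑ p : Fin h → A, prefProb π x (List.ofFn p) * f (List.ofFn p)

theorem prefExp_zero (π : X → List A → A → ℝ) (x : X) (f : List A → ℝ) :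
    prefExp π x 0 f = f [] := by
  simp [prefExp, prefProb]

theorem prefExp_succ (π : X → List A → A → ℝ) (x : X) (h : ℕ) (f : List A → ℝ) :
    prefExp π x (h + 1) f = prefExp π x h fun p => ∑ a, π x p a * f (p ++ [a]) := by
  have ofFn_snoc (q : A × (Fin h → A)) :
      List.ofFn (Fin.snocEquiv (fun _ => A) q) = List.ofFn q.2 ++ [q.1] := by
    rw [List.ofFn_succ', List.concat_eq_append]
    simp [Fin.snocEquiv]
  rw [prefExp, ← (Fin.snocEquiv fun _ => A).sum_comp, Fintype.sum_prod_type_right]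
  simp only [ofFn_snoc, prefProb_append_singleton, prefExp, mul_sum, mul_assoc]

theorem prefExp_add (π : X → List A → A → ℝ) (x : X) (h : ℕ) (f g : List A → ℝ) :
    (prefExp π x h fun p => f p + g p) = prefExp π x h f + prefExp π x h g := by
  simp only [prefExp, mul_add, sum_add_distrib]

end Prefix

section ExpectedReturn

variable {X A : Type*} [Fintype A]

/-- State value `V_π`: the expected reward-to-go from the prefix `p` with `n` steps remaining.
The index of `Qfun` does not count the current step, hence the shift by one. -/
noncomputable def stateValue (π r : X → List A → A → ℝ) (x : X) : ℕ → List A → ℝ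
  | 0, _ => 0
  | n + 1, p => ∑ a, π x p a * Qfun π r x n p a

theorem Qfun_eq_add_stateValue (π r : X → List A → A → ℝ) (x : X) (n : ℕ) (p : List A) (a : A) :
    Qfun π r x n p a = r x p a + stateValue π r x n (p ++ [a]) := by
  cases n <;> simp [Qfun, stateValue]

variable [Inhabited A]

/-- Conditional expectation of the total return given the prefix `p`, when `n` steps remain. -/
noncomputable def expectedReturn (π r : X → List A → A → ℝ) (x : X) (n : ℕ) (p : List A) : ℝ :=
  cumReward r x p + stateValue π r x n p

theorem expectedReturn_zero (π r : X → List A → A → ℝ) (x : X) :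
    expectedReturn π r x 0 = cumReward r x :=
  funext fun _ => add_zero _

theorem expectedReturn_append_singleton (π r : X → List A → A → ℝ) (x : X) (n : ℕ) (p : List A)
    (a : A) :
    expectedReturn π r x n (p ++ [a]) = cumReward r x p + Qfun π r x n p a := by
  rw [expectedReturn, cumReward_append_singleton, Qfun_eq_add_stateValue, add_assoc]

variable {π : X → List A → A → ℝ} {x : X}

theorem sum_mul_expectedReturn_append_singleton {p : List A} (hπ : ∑ a, π x p a = 1)
    (r : X → List A → A → ℝ) (n : ℕ) :
    ∑ a, π x p a * expectedReturn π r x n (p ++ [a]) = expectedReturn π r x (n + 1) p := by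
  simp only [expectedReturn_append_singleton, sum_mul_const_add hπ]
  rw [expectedReturn, stateValue]

theorem weightedVar_expectedReturn_append_singleton {p : List A} (hπ : ∑ a, π x p a = 1)
    (r : X → List A → A → ℝ) (n : ℕ) :
    weightedVar (π x p) (fun a => expectedReturn π r x n (p ++ [a])) =
      weightedVar (π x p) (Qfun π r x n p) := by
  simp only [expectedReturn_append_singleton, weightedVar_const_add hπ]

theorem prefExp_expectedReturn (hπ : ∀ p, ∑ a, π x p a = 1) (r : X → List A → A → ℝ) (h n : ℕ) :
    prefExp π x h (expectedReturn π r x n) = expectedReturn π r x (h + n) [] := by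
  induction h generalizing n with
  | zero => rw [prefExp_zero, zero_add]
  | succ h ih =>
    simp only [prefExp_succ, sum_mul_expectedReturn_append_singleton (hπ _), ih]
    rw [add_right_comm, add_assoc]

theorem prefExp_cumReward (hπ : ∀ p, ∑ a, π x p a = 1) (r : X → List A → A → ℝ) (H : ℕ) :
    prefExp π x H (cumReward r x) = expectedReturn π r x H [] := by
  rw [← expectedReturn_zero π, prefExp_expectedReturn hπ, add_zero]

theorem prefExp_succ_sq_expectedReturn_sub (hπ : ∀ p, ∑ a, π x p a = 1)
    (r : X → List A → A → ℝ) (c : ℝ) (h n : ℕ) :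
    (prefExp π x (h + 1) fun p => (expectedReturn π r x n p - c) ^ 2) =
      (prefExp π x h fun p => (expectedReturn π r x (n + 1) p - c) ^ 2) +
        prefExp π x h fun p => weightedVar (π x p) (Qfun π r x n p) := by
  simp only [prefExp_succ, sum_mul_sub_sq (hπ _), sum_mul_expectedReturn_append_singleton (hπ _),
    weightedVar_expectedReturn_append_singleton (hπ _), prefExp_add]

theorem sum_prefExp_weightedVar_Qfun (hπ : ∀ p, ∑ a, π x p a = 1) (r : X → List A → A → ℝ)
    (H : ℕ) :
    (∑ h ∈ range H, prefExp π x h fun p => weightedVar (π x p) (Qfun π r x (H - 1 - h) p)) =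
      weightedVar (fun τ : Fin H → A => prefProb π x (List.ofFn τ))
        (fun τ => cumReward r x (List.ofFn τ)) := by
  set c := prefExp π x H (cumReward r x) with hc
  set S : ℕ → ℝ := fun h => prefExp π x h fun p => (expectedReturn π r x (H - h) p - c) ^ 2 with hS
  have increment : ∀ h ∈ range H,
      (prefExp π x h fun p => weightedVar (π x p) (Qfun π r x (H - 1 - h) p)) =
        S (h + 1) - S h := by
    intro h hh
    have hlt : h < H := mem_range.1 hh
    have hafter : H - (h + 1) = H - 1 - h := by lia
    have hbefore : H - h = H - 1 - h + 1 := by lia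
    simp only [hS, hafter, hbefore, prefExp_succ_sq_expectedReturn_sub hπ, add_sub_cancel_left]
  have initial : S 0 = 0 := by
    simp only [hS, prefExp_zero, hc, prefExp_cumReward hπ, Nat.sub_zero, sub_self,
      zero_pow two_ne_zero]
  have final : S H = prefExp π x H fun τ => (cumReward r x τ - c) ^ 2 := by
    simp only [hS, Nat.sub_self, expectedReturn_zero]
  rw [sum_congr rfl increment, sum_range_sub, initial, sub_zero, final]
  rfl

end ExpectedReturn

/-- Variance decomposition in autoregressive MDPs: the sum over steps `h` of the
expected (over the step-`h` state distribution of `π`) variance over actions of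
`Q_π` equals the expected (over prompts `x ∼ ρ`) variance of the total cumulative
reward of a trajectory sampled from `π` given `x`. -/
theorem stmt_5 {X A : Type*} [Fintype X] [Fintype A] [Inhabited A]
    (H : ℕ) (hH : 0 < H)
    (ρ : X → ℝ) (hρ0 : ∀ x, 0 ≤ ρ x) (hρ1 : ∑ x, ρ x = 1)
    (π : X → List A → A → ℝ)
    (hπ0 : ∀ x p a, 0 ≤ π x p a) (hπ1 : ∀ x p, ∑ a, π x p a = 1)
    (r : X → List A → A → ℝ) :
    (∑ h ∈ Finset.range H, ∑ x : X, ρ x *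
        ∑ p : Fin h → A, prefProb π x (List.ofFn p) *
          (∑ a : A, π x (List.ofFn p) a *
            (Qfun π r x (H - 1 - h) (List.ofFn p) a
              - ∑ a' : A, π x (List.ofFn p) a' *
                  Qfun π r x (H - 1 - h) (List.ofFn p) a') ^ 2))
      = ∑ x : X, ρ x *
          ∑ τ : Fin H → A, prefProb π x (List.ofFn τ) *
            ((∑ i : Fin H, r x ((List.ofFn τ).take i.1) (τ i))
              - ∑ τ' : Fin H → A, prefProb π x (List.ofFn τ') *
                  ∑ i : Fin H, r x ((List.ofFn τ').take i.1) (τ' i)) ^ 2 := by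
  rw [sum_comm]
  refine sum_congr rfl fun x _ => ?_
  rw [← mul_sum]
  simp only [← cumReward_ofFn]
  exact congrArg (ρ x * ·) (sum_prefExp_weightedVar_Qfun (hπ1 x) r H)
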